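/- Let d ≥ 1, let c(x,y) := |x−y|²/2, and let μ, ν be Borel probability measures on ℝ^d with finite second moments. Then ∫ g dν ≤ ∫ g dμ holds for every c-concave function g : ℝ^d → ℝ that is integrable with respect to both μ and ν, if and only if W₂(ν,ρ)² ≤ W₂(μ,ρ)² holds for every Borel probability measure ρ on ℝ^d with compact support. -/

import Mathlib

open MeasureTheory Metric

noncomputable section

/-- The set of couplings of two measures on `ℝ^d`. -/
def Couplings {d : ℕ} (α β : Measure (EuclideanSpace ℝ (Fin d))) :
    Set (Measure (EuclideanSpace ℝ (Fin d) × EuclideanSpace ℝ (Fin d))) :=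
  {π | π.map Prod.fst = α ∧ π.map Prod.snd = β}

/-- The squared 2-Wasserstein distance `W₂(α,β)² = inf_{π ∈ Π(α,β)} ∫ |x-y|² dπ`. -/
def W2sq {d : ℕ} (α β : Measure (EuclideanSpace ℝ (Fin d))) : ℝ :=
  sInf {r : ℝ | ∃ π ∈ Couplings α β, r = ∫ p, ‖p.1 - p.2‖ ^ 2 ∂π}

/-- A function `g` is `c`-concave for the cost `c(x,y) = |x-y|²/2` iff
`x ↦ |x|²/2 - g(x)` is convex. -/
def CConcave {d : ℕ} (g : EuclideanSpace ℝ (Fin d) → ℝ) : Prop :=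
  ConvexOn ℝ Set.univ (fun x => ‖x‖ ^ 2 / 2 - g x)

/-!
Expanding the square, `W₂(α, ρ)²` is the sum of the two second moments minus twice the maximal
correlation `sup_π ∫ ⟪x, y⟫ dπ`, so the Wasserstein inequality compares the maximal correlations of
`μ` and `ν` with `ρ`, corrected by half a second moment. A `c`-concave function is `‖·‖² / 2 - φ`
with `φ` convex. If `φ x = max_{v ∈ T} (⟪x, v⟫ - ψ v)` with `T` finite, then `∫ φ dα + ∫ ψ dρ` is
the Kantorovich dual functional for the maximal correlation of `α` with a measure `ρ` carried by
`T`. Weak duality, together with strong duality for finitely supported `ρ`, therefore links the two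
conditions for polyhedral `φ`: given `ρ`, apply the integral inequality to a nearly optimal `φ` for
`(ν, ρ)`; given `φ`, apply the Wasserstein inequality to the image `ρ` of `μ` under a selection of
the subgradient of `φ`, for which `φ` is optimal for `(μ, ρ)`. Approximation does the rest: general
`ρ` by simple functions, since gluing makes the maximal correlation continuous, and general convex
`φ` by increasing limits of polyhedral ones.

Strong duality is obtained by entropic regularisation: replacing the maximum by a log-sum-exp makes
the dual functional differentiable, its minimiser exists by coercivity, and the first-order
condition says that the softmax weights split `ν` into pieces whose masses are the weights of `ρ`.
-/

section Couplings

variable {X Y Z : Type*} [MeasurableSpace X] [MeasurableSpace Y] [MeasurableSpace Z]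
  {π : Measure (X × Y)} {α : Measure X} {β : Measure Y}

/-- `IsCoupling π α β` says that `π` is a coupling of `α` and `β`, i.e. `π ∈ Π(α, β)`; it extends
`Couplings` to measures on arbitrary measurable spaces. -/
def IsCoupling (π : Measure (X × Y)) (α : Measure X) (β : Measure Y) : Prop :=
  π.fst = α ∧ π.snd = β

namespace IsCoupling

lemma measurePreserving_fst (h : IsCoupling π α β) : MeasurePreserving Prod.fst π α :=
  ⟨measurable_fst, h.1⟩

lemma measurePreserving_snd (h : IsCoupling π α β) : MeasurePreserving Prod.snd π β :=
  ⟨measurable_snd, h.2⟩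

lemma integrable_fst (h : IsCoupling π α β) {f : X → ℝ} (hf : Integrable f α) :
    Integrable (fun p => f p.1) π :=
  h.measurePreserving_fst.integrable_comp_of_integrable hf

lemma integrable_snd (h : IsCoupling π α β) {f : Y → ℝ} (hf : Integrable f β) :
    Integrable (fun p => f p.2) π :=
  h.measurePreserving_snd.integrable_comp_of_integrable hf

lemma integral_fst (h : IsCoupling π α β) {f : X → ℝ} (hf : Integrable f α) :
    ∫ p, f p.1 ∂π = ∫ x, f x ∂α := by
  rw [← h.measurePreserving_fst.map_eq] at hf ⊢
  exact (integral_map measurable_fst.aemeasurable hf.aestronglyMeasurable).symm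

lemma integral_snd (h : IsCoupling π α β) {f : Y → ℝ} (hf : Integrable f β) :
    ∫ p, f p.2 ∂π = ∫ y, f y ∂β := by
  rw [← h.measurePreserving_snd.map_eq] at hf ⊢
  exact (integral_map measurable_snd.aemeasurable hf.aestronglyMeasurable).symm

lemma ae_snd (h : IsCoupling π α β) {P : Y → Prop} (hP : ∀ᵐ y ∂β, P y) : ∀ᵐ p ∂π, P p.2 :=
  h.measurePreserving_snd.quasiMeasurePreserving.ae hP

protected lemma prod [IsProbabilityMeasure α] [IsProbabilityMeasure β] :
    IsCoupling (α.prod β) α β :=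
  ⟨Measure.fst_prod, Measure.snd_prod⟩

lemma map_prodMk {f : X → Y} (hf : Measurable f) :
    IsCoupling (α.map fun x => (x, f x)) α (α.map f) :=
  ⟨(Measure.fst_map_prodMk hf).trans Measure.map_id, Measure.snd_map_prodMk measurable_id⟩

lemma map_snd (h : IsCoupling π α β) {s : Y → Z} (hs : Measurable s) :
    IsCoupling (π.map (Prod.map id s)) α (β.map s) := by
  constructor
  · rw [← h.1]
    exact Measure.fst_map_prodMk (hs.comp measurable_snd)
  · rw [← h.2]
    exact (Measure.snd_map_prodMk measurable_fst).trans (Measure.map_map hs measurable_snd).symm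

open ProbabilityTheory in
/-- Gluing: draw `(x, z)` from `σ` and then `y` from the conditional law of `β` given `s y = z`. -/
lemma exists_map_snd_eq [StandardBorelSpace Y] [Nonempty Y] [MeasurableEq Z]
    [IsFiniteMeasure α] [IsFiniteMeasure β] {s : Y → Z} (hs : Measurable s) {σ : Measure (X × Z)}
    (hσ : IsCoupling σ α (β.map s)) :
    ∃ π, IsCoupling π α β ∧ π.map (Prod.map id s) = σ := by
  have : IsFiniteMeasure (σ.map Prod.fst) := hσ.measurePreserving_fst.map_eq ▸ ‹_›
  have : IsFiniteMeasure σ := Measure.isFiniteMeasure_of_map measurable_fst.aemeasurable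
  set κ : Kernel Z Y := condDistrib id s β
  set Γ : Measure ((X × Z) × Y) := σ ⊗ₘ κ.prodMkLeft X
  have hΓfst : Γ.fst = σ := Measure.fst_compProd _ _
  have hΓzy : Γ.map (fun p => (p.1.2, p.2)) = β.map (fun y => (s y, y)) := by
    have hβ : β.map s ⊗ₘ κ = β.map (fun y => (s y, y)) := compProd_map_condDistrib aemeasurable_id
    rw [← hβ, ← hσ.2]
    ext t ht
    have hm : Measurable fun p : (X × Z) × Y => (p.1.2, p.2) := by fun_prop
    rw [Measure.map_apply hm ht, Measure.compProd_apply (hm ht), Measure.compProd_apply ht,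
      Measure.snd, lintegral_map (Kernel.measurable_kernel_prodMk_left ht) measurable_snd]
    rfl
  have hΓeq : ∀ᵐ p ∂Γ, s p.2 = p.1.2 := by
    have : ∀ᵐ q ∂(Γ.map fun p => (p.1.2, p.2)), s q.2 = q.1 := by
      rw [hΓzy, ae_map_iff (by fun_prop) (measurableSet_eq_fun (by fun_prop) measurable_fst)]
      exact Filter.Eventually.of_forall fun _ => rfl
    exact ae_of_ae_map (by fun_prop) this
  refine ⟨Γ.map fun p => (p.1.1, p.2), ⟨?_, ?_⟩, ?_⟩
  · rw [Measure.fst_map_prodMk measurable_snd, ← hσ.1, ← hΓfst, Measure.fst, Measure.fst,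
      Measure.map_map measurable_fst measurable_fst]
    rfl
  · rw [Measure.snd_map_prodMk (by fun_prop),
      ← Measure.snd_map_prodMk (X := fun p : (X × Z) × Y => p.1.2) (by fun_prop), hΓzy,
      Measure.snd_map_prodMk hs, Measure.map_id']
  · rw [Measure.map_map (by fun_prop) (by fun_prop), ← hΓfst]
    refine Measure.map_congr ?_
    filter_upwards [hΓeq] with p hp
    simp [hp]

end IsCoupling

end Couplings

section WassersteinSq

variable {E : Type*} [NormedAddCommGroup E] [MeasurableSpace E]

/-- The squared 2-Wasserstein distance; it extends `W2sq` to arbitrary normed groups. -/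
def wassersteinSq (α β : Measure E) : ℝ :=
  sInf {r : ℝ | ∃ π, IsCoupling π α β ∧ r = ∫ p, ‖p.1 - p.2‖ ^ 2 ∂π}

lemma IsCoupling.wassersteinSq_le {α β : Measure E} {π : Measure (E × E)}
    (hπ : IsCoupling π α β) : wassersteinSq α β ≤ ∫ p, ‖p.1 - p.2‖ ^ 2 ∂π := by
  refine csInf_le ⟨0, ?_⟩ ⟨π, hπ, rfl⟩
  rintro _ ⟨π, -, rfl⟩
  positivity

end WassersteinSq

section MaxCorrelation

open scoped RealInnerProductSpace

variable {E : Type*} [NormedAddCommGroup E] [InnerProductSpace ℝ E] [MeasurableSpace E]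

/-- The maximal correlation `sup_{π ∈ Π(α,β)} ∫ ⟪x, y⟫ dπ(x, y)`: expanding the square turns the
transport problem for the quadratic cost into this maximisation problem. -/
def maxCorrelation (α β : Measure E) : ℝ :=
  sSup {r : ℝ | ∃ π, IsCoupling π α β ∧ r = ∫ p, ⟪p.1, p.2⟫ ∂π}

lemma maxCorrelation_le {α β : Measure E} [IsProbabilityMeasure α] [IsProbabilityMeasure β] {C : ℝ}
    (h : ∀ π, IsCoupling π α β → ∫ p, ⟪p.1, p.2⟫ ∂π ≤ C) : maxCorrelation α β ≤ C := by
  refine csSup_le ⟨_, α.prod β, .prod, rfl⟩ ?_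
  rintro _ ⟨π, hπ, rfl⟩
  exact h π hπ

variable [BorelSpace E] [SecondCountableTopology E] {α β : Measure E} {π : Measure (E × E)}

namespace IsCoupling

lemma integrable_inner (hπ : IsCoupling π α β) (hα : Integrable (fun x => ‖x‖ ^ 2) α)
    (hβ : Integrable (fun y => ‖y‖ ^ 2) β) : Integrable (fun p : E × E => ⟪p.1, p.2⟫) π := by
  refine ((hπ.integrable_fst hα).add (hπ.integrable_snd hβ)).mono' (by fun_prop) ?_
  refine Filter.Eventually.of_forall fun p => ?_
  calc ‖⟪p.1, p.2⟫‖ ≤ ‖p.1‖ * ‖p.2‖ := norm_inner_le_norm _ _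
    _ ≤ ‖p.1‖ ^ 2 + ‖p.2‖ ^ 2 := by nlinarith [sq_nonneg (‖p.1‖ - ‖p.2‖)]

lemma integral_norm_sub_sq (hπ : IsCoupling π α β) (hα : Integrable (fun x => ‖x‖ ^ 2) α)
    (hβ : Integrable (fun y => ‖y‖ ^ 2) β) :
    ∫ p, ‖p.1 - p.2‖ ^ 2 ∂π =
      ∫ x, ‖x‖ ^ 2 ∂α + ∫ y, ‖y‖ ^ 2 ∂β - 2 * ∫ p, ⟪p.1, p.2⟫ ∂π := by
  have hinner := (hπ.integrable_inner hα hβ).const_mul 2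
  have hfst := hπ.integrable_fst hα
  have hsub : Integrable (fun p : E × E => ‖p.1‖ ^ 2 - 2 * ⟪p.1, p.2⟫) π := hfst.sub hinner
  simp only [norm_sub_sq_real]
  rw [integral_add hsub (hπ.integrable_snd hβ), integral_sub hfst hinner, integral_const_mul,
    hπ.integral_fst hα, hπ.integral_snd hβ]
  ring

lemma integral_inner_le_maxCorrelation (hπ : IsCoupling π α β)
    (hα : Integrable (fun x => ‖x‖ ^ 2) α) (hβ : Integrable (fun y => ‖y‖ ^ 2) β) :
    ∫ p, ⟪p.1, p.2⟫ ∂π ≤ maxCorrelation α β := by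
  refine le_csSup ⟨(∫ x, ‖x‖ ^ 2 ∂α + ∫ y, ‖y‖ ^ 2 ∂β) / 2, ?_⟩ ⟨π, hπ, rfl⟩
  rintro _ ⟨π, hπ, rfl⟩
  have h0 : 0 ≤ ∫ p, ‖p.1 - p.2‖ ^ 2 ∂π := by positivity
  rw [hπ.integral_norm_sub_sq hα hβ] at h0
  linarith

end IsCoupling

lemma wassersteinSq_eq_sub_maxCorrelation [IsProbabilityMeasure α] [IsProbabilityMeasure β]
    (hα : Integrable (fun x => ‖x‖ ^ 2) α) (hβ : Integrable (fun y => ‖y‖ ^ 2) β) :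
    wassersteinSq α β = ∫ x, ‖x‖ ^ 2 ∂α + ∫ y, ‖y‖ ^ 2 ∂β - 2 * maxCorrelation α β := by
  apply le_antisymm
  · have : maxCorrelation α β ≤
        (∫ x, ‖x‖ ^ 2 ∂α + ∫ y, ‖y‖ ^ 2 ∂β - wassersteinSq α β) / 2 :=
      maxCorrelation_le fun π hπ => by
        linarith [hπ.wassersteinSq_le, hπ.integral_norm_sub_sq hα hβ]
    linarith
  · refine le_csInf ⟨_, α.prod β, .prod, rfl⟩ ?_
    rintro _ ⟨π, hπ, rfl⟩
    linarith [hπ.integral_inner_le_maxCorrelation hα hβ, hπ.integral_norm_sub_sq hα hβ]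

lemma wassersteinSq_le_wassersteinSq_iff {μ ν ρ : Measure E} [IsProbabilityMeasure μ]
    [IsProbabilityMeasure ν] [IsProbabilityMeasure ρ] (hμ : Integrable (fun x => ‖x‖ ^ 2) μ)
    (hν : Integrable (fun x => ‖x‖ ^ 2) ν) (hρ : Integrable (fun y => ‖y‖ ^ 2) ρ) :
    wassersteinSq ν ρ ≤ wassersteinSq μ ρ ↔
      maxCorrelation μ ρ - (∫ x, ‖x‖ ^ 2 ∂μ) / 2 ≤ maxCorrelation ν ρ - (∫ x, ‖x‖ ^ 2 ∂ν) / 2 := by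
  rw [wassersteinSq_eq_sub_maxCorrelation hμ hρ, wassersteinSq_eq_sub_maxCorrelation hν hρ]
  constructor <;> intro h <;> linarith

lemma maxCorrelation_le_integral_add_integral [IsProbabilityMeasure α] [IsProbabilityMeasure β]
    (hα : Integrable (fun x => ‖x‖ ^ 2) α) (hβ : Integrable (fun y => ‖y‖ ^ 2) β) {φ ψ : E → ℝ}
    (hφ : Integrable φ α) (hψ : Integrable ψ β) (h : ∀ᵐ y ∂β, ∀ x, ⟪x, y⟫ ≤ φ x + ψ y) :
    maxCorrelation α β ≤ ∫ x, φ x ∂α + ∫ y, ψ y ∂β := by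
  refine maxCorrelation_le fun π hπ => ?_
  rw [← hπ.integral_fst hφ, ← hπ.integral_snd hψ,
    ← integral_add (hπ.integrable_fst hφ) (hπ.integrable_snd hψ)]
  refine integral_mono_ae (hπ.integrable_inner hα hβ)
    ((hπ.integrable_fst hφ).add (hπ.integrable_snd hψ)) ?_
  filter_upwards [hπ.ae_snd h] with p hp using hp p.1

end MaxCorrelation

section Approximation

open Filter Topology
open scoped RealInnerProductSpace

lemma exists_simpleFunc_tendsto_integral_norm_sub_sq {E : Type*} [NormedAddCommGroup E]
    [MeasurableSpace E] [BorelSpace E] [SecondCountableTopology E] {ρ : Measure E}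
    (hρ : Integrable (fun y => ‖y‖ ^ 2) ρ) :
    ∃ s : ℕ → SimpleFunc E E, Tendsto (fun n => ∫ y, ‖s n y - y‖ ^ 2 ∂ρ) atTop (𝓝 0) := by
  refine ⟨SimpleFunc.approxOn id measurable_id Set.univ 0 (Set.mem_univ 0), ?_⟩
  set s := SimpleFunc.approxOn (id : E → E) measurable_id Set.univ 0 (Set.mem_univ 0)
  have hbound (n : ℕ) (y : E) : ‖s n y - y‖ ≤ ‖y‖ := by
    simpa only [edist_eq_enorm_sub, id, zero_sub, enorm_neg, enorm_le_iff_norm_le] using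
      SimpleFunc.edist_approxOn_le measurable_id (Set.mem_univ (0 : E)) y n
  have hlim (y : E) : Tendsto (fun n => ‖s n y - y‖ ^ 2) atTop (𝓝 0) := by
    have h : Tendsto (s · y) atTop (𝓝 y) :=
      SimpleFunc.tendsto_approxOn measurable_id (Set.mem_univ 0) (by simp)
    simpa using ((h.sub_const y).norm.pow 2)
  rw [← integral_zero E ℝ (μ := ρ)]
  refine tendsto_integral_of_dominated_convergence _
    (fun n => (((s n).measurable.sub measurable_id).norm.pow_const 2).aestronglyMeasurable) hρ
    (fun n => .of_forall fun y => ?_) (.of_forall hlim)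
  rw [norm_pow, norm_norm]
  exact pow_le_pow_left₀ (norm_nonneg _) (hbound n y) 2

variable {E : Type*} [NormedAddCommGroup E] [InnerProductSpace ℝ E] [MeasurableSpace E]
  [BorelSpace E] [SecondCountableTopology E] {α ρ : Measure E}

lemma IsCoupling.abs_integral_inner_comp_le {π : Measure (E × E)} (hπ : IsCoupling π α ρ)
    (hα : Integrable (fun x => ‖x‖ ^ 2) α) {t : E → E} (ht : Measurable t)
    (htρ : Integrable (fun y => ‖t y‖ ^ 2) ρ) :
    |∫ p, ⟪p.1, t p.2⟫ ∂π| ≤ √(∫ x, ‖x‖ ^ 2 ∂α) * √(∫ y, ‖t y‖ ^ 2 ∂ρ) := by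
  have hfst : MemLp (fun p : E × E => p.1) 2 π :=
    (memLp_two_iff_integrable_sq_norm (by fun_prop)).2 (hπ.integrable_fst hα)
  have hsnd : MemLp (fun p : E × E => t p.2) 2 π :=
    (memLp_two_iff_integrable_sq_norm (ht.comp measurable_snd).aestronglyMeasurable).2
      (hπ.integrable_snd htρ)
  calc |∫ p, ⟪p.1, t p.2⟫ ∂π| ≤ ∫ p, |⟪p.1, t p.2⟫| ∂π := abs_integral_le_integral_abs
    _ ≤ ∫ p, ‖p.1‖ * ‖t p.2‖ ∂π :=
      integral_mono_of_nonneg (.of_forall fun _ => abs_nonneg _)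
        (hfst.norm.integrable_mul hsnd.norm) (.of_forall fun p => abs_real_inner_le_norm _ _)
    _ ≤ √(∫ p, ‖p.1‖ ^ 2 ∂π) * √(∫ p, ‖t p.2‖ ^ 2 ∂π) := by
      simpa only [Real.rpow_two, ← Real.sqrt_eq_rpow] using integral_mul_norm_le_Lp_mul_Lq
        .two_two (by simpa using hfst) (by simpa using hsnd)
    _ = √(∫ x, ‖x‖ ^ 2 ∂α) * √(∫ y, ‖t y‖ ^ 2 ∂ρ) := by
      rw [hπ.integral_fst hα, hπ.integral_snd htρ]

variable [CompleteSpace E] [IsProbabilityMeasure α] [IsProbabilityMeasure ρ]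

lemma abs_maxCorrelation_map_sub_le (hα : Integrable (fun x => ‖x‖ ^ 2) α)
    (hρ : Integrable (fun y => ‖y‖ ^ 2) ρ) {s : E → E} (hs : Measurable s)
    (hsρ : Integrable (fun y => ‖s y‖ ^ 2) ρ) :
    |maxCorrelation α (ρ.map s) - maxCorrelation α ρ| ≤
      √(∫ x, ‖x‖ ^ 2 ∂α) * √(∫ y, ‖s y - y‖ ^ 2 ∂ρ) := by
  have : IsProbabilityMeasure (ρ.map s) := Measure.isProbabilityMeasure_map hs.aemeasurable
  have hmap : Integrable (fun z => ‖z‖ ^ 2) (ρ.map s) :=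
    (integrable_map_measure (by fun_prop) hs.aemeasurable).2 hsρ
  have hdiff : Integrable (fun y => ‖s y - y‖ ^ 2) ρ := by
    rw [← memLp_two_iff_integrable_sq_norm (by fun_prop)] at hρ hsρ ⊢
    exact hsρ.sub hρ
  have key (π : Measure (E × E)) (hπ : IsCoupling π α ρ) :
      |∫ p, ⟪p.1, p.2⟫ ∂π.map (Prod.map id s) - ∫ p, ⟪p.1, p.2⟫ ∂π| ≤
        √(∫ x, ‖x‖ ^ 2 ∂α) * √(∫ y, ‖s y - y‖ ^ 2 ∂ρ) := by
    have hint := (hπ.map_snd hs).integrable_inner hα hmap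
    have hids : Measurable (Prod.map (id : E → E) s) := measurable_id.prodMap hs
    have hcomp : Integrable (fun p : E × E => ⟪p.1, s p.2⟫) π := hint.comp_measurable hids
    rw [integral_map hids.aemeasurable hint.aestronglyMeasurable]
    simp only [Prod.map_fst, Prod.map_snd, id]
    rw [← integral_sub hcomp (hπ.integrable_inner hα hρ)]
    simpa only [inner_sub_right] using
      hπ.abs_integral_inner_comp_le hα (t := fun y => s y - y) (hs.sub measurable_id) hdiff
  rw [abs_sub_le_iff, sub_le_iff_le_add, sub_le_iff_le_add]
  constructor <;> refine maxCorrelation_le fun σ hσ => ?_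
  · obtain ⟨π, hπ, rfl⟩ := hσ.exists_map_snd_eq hs
    linarith [(abs_le.1 (key π hπ)).2, hπ.integral_inner_le_maxCorrelation hα hρ]
  · linarith [(abs_le.1 (key σ hσ)).1,
      (hσ.map_snd hs).integral_inner_le_maxCorrelation hα hmap]

lemma tendsto_maxCorrelation_map (hα : Integrable (fun x => ‖x‖ ^ 2) α)
    (hρ : Integrable (fun y => ‖y‖ ^ 2) ρ) {s : ℕ → SimpleFunc E E}
    (hs : Tendsto (fun n => ∫ y, ‖s n y - y‖ ^ 2 ∂ρ) atTop (𝓝 0)) :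
    Tendsto (fun n => maxCorrelation α (ρ.map (s n))) atTop (𝓝 (maxCorrelation α ρ)) := by
  have hsρ (n : ℕ) : Integrable (fun y => ‖s n y‖ ^ 2) ρ :=
    ((s n).map fun y => ‖y‖ ^ 2).integrable_of_isFiniteMeasure.congr (.of_forall fun _ => rfl)
  rw [← tendsto_sub_nhds_zero_iff]
  refine squeeze_zero_norm
    (fun n => abs_maxCorrelation_map_sub_le hα hρ (s n).measurable (hsρ n)) ?_
  simpa using hs.sqrt.const_mul (√(∫ x, ‖x‖ ^ 2 ∂α))

end Approximation

section MaxAffine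

open scoped RealInnerProductSpace

variable {E : Type*} [NormedAddCommGroup E] [InnerProductSpace ℝ E] {T : Finset E} {ψ : E → ℝ}

/-- The polyhedral convex function `x ↦ max_{v ∈ T} (⟪x, v⟫ - ψ v)` with slopes in `T`, i.e. the
convex conjugate of the function equal to `ψ` on `T` and to `+∞` elsewhere. -/
def maxAffine (T : Finset E) (hT : T.Nonempty) (ψ : E → ℝ) : E → ℝ :=
  T.sup' hT fun v x => ⟪x, v⟫ - ψ v

lemma inner_sub_le_maxAffine (hT : T.Nonempty) {v : E} (hv : v ∈ T) (x : E) :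
    ⟪x, v⟫ - ψ v ≤ maxAffine T hT ψ x :=
  T.le_sup' (fun v x => ⟪x, v⟫ - ψ v) hv x

lemma exists_maxAffine_eq (hT : T.Nonempty) (x : E) :
    ∃ v ∈ T, maxAffine T hT ψ x = ⟪x, v⟫ - ψ v := by
  simpa only [maxAffine, Finset.sup'_apply] using T.exists_mem_eq_sup' hT fun v => ⟪x, v⟫ - ψ v

lemma convexOn_maxAffine (hT : T.Nonempty) : ConvexOn ℝ Set.univ (maxAffine T hT ψ) := by
  refine Finset.sup'_induction hT _ (fun _ h₁ _ h₂ => h₁.sup h₂) fun v _ => ?_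
  refine (((innerₗ E v).convexOn convex_univ).sub (concaveOn_const (ψ v) convex_univ)).congr ?_
  exact fun x _ => by simp [real_inner_comm]

lemma continuous_maxAffine (hT : T.Nonempty) : Continuous (maxAffine T hT ψ) :=
  Finset.sup'_induction hT _ (fun _ h₁ _ h₂ => h₁.sup h₂) fun v _ => by fun_prop

variable [MeasurableSpace E] [BorelSpace E]

lemma integrable_inner_const [SecondCountableTopology E] {α : Measure E} [IsFiniteMeasure α]
    (hα : Integrable (fun x => ‖x‖ ^ 2) α) (v : E) : Integrable (fun x => ⟪x, v⟫) α :=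
  (((memLp_two_iff_integrable_sq_norm (by fun_prop)).2 hα).integrable one_le_two).inner_const v

lemma integrable_maxAffine [SecondCountableTopology E] {α : Measure E} [IsFiniteMeasure α]
    (hα : Integrable (fun x => ‖x‖ ^ 2) α) (hT : T.Nonempty) :
    Integrable (maxAffine T hT ψ) α :=
  Finset.sup'_induction (p := (Integrable · α)) hT _ (fun _ h₁ _ h₂ => h₁.sup h₂) fun v _ =>
    (integrable_inner_const hα v).sub (integrable_const (ψ v))

lemma exists_measurable_maxAffine_eq (hT : T.Nonempty) :
    ∃ j : E → E, Measurable j ∧ ∀ x, j x ∈ T ∧ maxAffine T hT ψ x = ⟪x, j x⟫ - ψ (j x) := by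
  classical
  induction hT using Finset.Nonempty.cons_induction with
  | singleton a => exact ⟨fun _ => a, measurable_const, fun x => by simp [maxAffine]⟩
  | cons a T ha hT ih =>
    obtain ⟨j, hj, hjT⟩ := ih
    have hcons (x : E) : maxAffine (T.cons a ha) (Finset.cons_nonempty ha) ψ x =
        max (⟪x, a⟫ - ψ a) (maxAffine T hT ψ x) := by
      rw [maxAffine, Finset.sup'_cons hT]; rfl
    have hle : MeasurableSet {x | maxAffine T hT ψ x ≤ ⟪x, a⟫ - ψ a} :=
      (isClosed_le (continuous_maxAffine hT) (by fun_prop)).measurableSet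
    refine ⟨fun x => if maxAffine T hT ψ x ≤ ⟪x, a⟫ - ψ a then a else j x,
      .ite hle measurable_const hj, fun x => ?_⟩
    rw [hcons]
    beta_reduce
    split_ifs with h
    · exact ⟨Finset.mem_cons_self a T, max_eq_left h⟩
    · exact ⟨Finset.mem_cons_of_mem (hjT x).1, (max_eq_right (not_le.1 h).le).trans (hjT x).2⟩

end MaxAffine

section LogSumExp

variable {ι : Type*} [Fintype ι]

/-- The log-sum-exp function, a smooth substitute for the maximum of finitely many numbers. -/
def logSumExp (z : ι → ℝ) : ℝ :=
  Real.log (∑ i, Real.exp (z i))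

/-- The softmax weights, the gradient of `logSumExp`. -/
def softmax (z : ι → ℝ) (i : ι) : ℝ :=
  Real.exp (z i) / ∑ j, Real.exp (z j)

variable [Nonempty ι] {z z' : ι → ℝ}

lemma sum_exp_pos (z : ι → ℝ) : 0 < ∑ i, Real.exp (z i) :=
  Finset.sum_pos (fun _ _ => Real.exp_pos _) Finset.univ_nonempty

lemma le_logSumExp (z : ι → ℝ) (j : ι) : z j ≤ logSumExp z := by
  rw [logSumExp, Real.le_log_iff_exp_le (sum_exp_pos z)]
  exact Finset.single_le_sum (f := fun i => Real.exp (z i)) (fun _ _ => (Real.exp_pos _).le)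
    (Finset.mem_univ j)

lemma logSumExp_le_add {t : ℝ} (h : ∀ i, z i ≤ z' i + t) : logSumExp z ≤ logSumExp z' + t := by
  rw [logSumExp, logSumExp, Real.log_le_iff_le_exp (sum_exp_pos z), Real.exp_add,
    Real.exp_log (sum_exp_pos z'), Finset.sum_mul]
  gcongr with i
  rw [← Real.exp_add]
  exact Real.exp_le_exp.2 (h i)

lemma lipschitzWith_logSumExp : LipschitzWith 1 (logSumExp : (ι → ℝ) → ℝ) := by
  refine .of_le_add fun z z' => logSumExp_le_add fun i => ?_
  have := dist_le_pi_dist z z' i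
  rw [Real.dist_eq] at this
  linarith [le_abs_self (z i - z' i)]

lemma abs_logSumExp_le (z : ι → ℝ) : |logSumExp z| ≤ ‖z‖ + |logSumExp (0 : ι → ℝ)| := by
  have := lipschitzWith_logSumExp.dist_le_mul z 0
  rw [Real.dist_eq, dist_zero_right, NNReal.coe_one, one_mul] at this
  linarith [abs_sub_abs_le_abs_sub (logSumExp z) (logSumExp (0 : ι → ℝ))]

lemma softmax_pos (z : ι → ℝ) (i : ι) : 0 < softmax z i :=
  div_pos (Real.exp_pos _) (sum_exp_pos z)

lemma sum_softmax (z : ι → ℝ) : ∑ i, softmax z i = 1 := by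
  simp only [softmax, ← Finset.sum_div]
  exact div_self (sum_exp_pos z).ne'

lemma softmax_mem_stdSimplex (z : ι → ℝ) : softmax z ∈ stdSimplex ℝ ι :=
  ⟨fun i => (softmax_pos z i).le, sum_softmax z⟩

lemma continuous_softmax : Continuous (softmax : (ι → ℝ) → ι → ℝ) :=
  continuous_pi fun _ => .div (by fun_prop) (by fun_prop) fun z => (sum_exp_pos z).ne'

lemma log_softmax (z : ι → ℝ) (i : ι) : Real.log (softmax z i) = z i - logSumExp z := by
  rw [softmax, Real.log_div (Real.exp_pos _).ne' (sum_exp_pos z).ne', Real.log_exp, logSumExp]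

/-- The entropy of the softmax weights is bounded, crudely, by the number of terms. -/
lemma logSumExp_sub_card_le (z : ι → ℝ) :
    logSumExp z - Fintype.card ι ≤ ∑ i, softmax z i * z i := by
  have hentropy : -(Fintype.card ι : ℝ) ≤ ∑ i, softmax z i * Real.log (softmax z i) := by
    have h (i : ι) : -1 ≤ softmax z i * Real.log (softmax z i) := by
      have hpos := softmax_pos z i
      have := mul_le_mul_of_nonneg_left (Real.one_sub_inv_le_log_of_pos hpos) hpos.le
      rw [mul_sub, mul_inv_cancel₀ hpos.ne'] at this
      linarith
    simpa using Finset.sum_le_sum fun i (_ : i ∈ Finset.univ) => h i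
  simp only [log_softmax, mul_sub, Finset.sum_sub_distrib, ← Finset.sum_mul, sum_softmax,
    one_mul] at hentropy
  linarith

lemma logSumExp_add_single_le [DecidableEq ι] (z : ι → ℝ) (j : ι) (t : ℝ) :
    logSumExp (z + Pi.single j t) ≤ logSumExp z + softmax z j * (Real.exp t - 1) := by
  have hsum : ∑ i, Real.exp ((z + Pi.single j t : ι → ℝ) i) =
      (∑ i, Real.exp (z i)) * (1 + softmax z j * (Real.exp t - 1)) := by
    have hterm (i : ι) : Real.exp ((z + Pi.single j t : ι → ℝ) i) =
        Real.exp (z i) + if i = j then Real.exp (z j) * (Real.exp t - 1) else 0 := by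
      obtain rfl | hij := eq_or_ne i j
      · simp [Real.exp_add, mul_sub]
      · simp [hij]
    simp only [hterm, Finset.sum_add_distrib, Finset.sum_ite_eq', Finset.mem_univ, if_true,
      softmax]
    field_simp [(sum_exp_pos z).ne']
  have hpos : 0 < 1 + softmax z j * (Real.exp t - 1) :=
    pos_of_mul_pos_right (hsum ▸ sum_exp_pos _) (sum_exp_pos z).le
  rw [logSumExp, hsum, Real.log_mul (sum_exp_pos z).ne' hpos.ne', ← logSumExp]
  linarith [Real.log_le_sub_one_of_pos hpos]

end LogSumExp

section EntropicDual

open Filter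

variable {ι Ω : Type*} [Fintype ι] [MeasurableSpace Ω] {ν : Measure Ω} {f : Ω → ι → ℝ}
  {w ψ ψ' : ι → ℝ}

/-- The dual functional of entropic semi-discrete optimal transport, for the reward functions
`f · i` and target masses `w i`. -/
def entropicDual (ν : Measure Ω) (f : Ω → ι → ℝ) (w ψ : ι → ℝ) : ℝ :=
  ∫ x, logSumExp (f x - ψ) ∂ν + ∑ i, w i * ψ i

variable [Nonempty ι]

lemma integrable_logSumExp [IsFiniteMeasure ν] (hf : Integrable f ν) :
    Integrable (fun x => logSumExp (f x)) ν :=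
  (hf.norm.add (integrable_const _)).mono'
    (lipschitzWith_logSumExp.continuous.comp_aestronglyMeasurable hf.aestronglyMeasurable)
    (.of_forall fun x => abs_logSumExp_le (f x))

lemma aestronglyMeasurable_softmax (hf : AEStronglyMeasurable f ν) :
    AEStronglyMeasurable (fun x => softmax (f x)) ν :=
  continuous_softmax.comp_aestronglyMeasurable hf

variable [IsProbabilityMeasure ν]

lemma integral_logSumExp_sub_le_add (hf : Integrable f ν) {t : ℝ} (h : ∀ i, ψ' i ≤ ψ i + t) :
    ∫ x, logSumExp (f x - ψ) ∂ν ≤ ∫ x, logSumExp (f x - ψ') ∂ν + t := by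
  have hint (ψ : ι → ℝ) : Integrable (fun x => logSumExp (f x - ψ)) ν :=
    integrable_logSumExp (hf.sub (integrable_const ψ))
  calc ∫ x, logSumExp (f x - ψ) ∂ν ≤ ∫ x, (logSumExp (f x - ψ') + t) ∂ν :=
      integral_mono (hint ψ) ((hint ψ').add (integrable_const t)) fun x =>
        logSumExp_le_add fun i => by
          simp only [Pi.sub_apply]
          linarith [h i]
    _ = ∫ x, logSumExp (f x - ψ') ∂ν + t := by
      rw [integral_add (hint ψ') (integrable_const t), integral_const, probReal_univ, one_smul]

lemma continuous_entropicDual (hf : Integrable f ν) : Continuous (entropicDual ν f w) := by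
  refine .add (LipschitzWith.of_le_add fun ψ ψ' => ?_).continuous (by fun_prop)
  refine integral_logSumExp_sub_le_add hf fun i => ?_
  have := dist_le_pi_dist ψ ψ' i
  rw [Real.dist_eq] at this
  linarith [neg_abs_le (ψ i - ψ' i)]

lemma entropicDual_add_const_le (hf : Integrable f ν) (hw1 : ∑ i, w i = 1) (c : ℝ) :
    entropicDual ν f w (fun i => ψ i + c) ≤ entropicDual ν f w ψ := by
  have hshift : ∫ x, logSumExp (f x - fun i => ψ i + c) ∂ν ≤
      ∫ x, logSumExp (f x - ψ) ∂ν + -c :=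
    integral_logSumExp_sub_le_add hf fun i => by simp
  have hsum : ∑ i, w i * (ψ i + c) = ∑ i, w i * ψ i + c := by
    simp only [mul_add, Finset.sum_add_distrib, ← Finset.sum_mul, hw1, one_mul]
  rw [entropicDual, entropicDual, hsum]
  linarith

lemma mul_le_entropicDual_add (hf : Integrable f ν) (hw : ∀ i, 0 ≤ w i) (hψ : ∀ i, 0 ≤ ψ i) {j : ι}
    (hj : ψ j = 0) (i : ι) : w i * ψ i ≤ entropicDual ν f w ψ + ∫ x, ‖f x‖ ∂ν := by
  have hlse : -∫ x, ‖f x‖ ∂ν ≤ ∫ x, logSumExp (f x - ψ) ∂ν := by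
    rw [← integral_neg]
    refine integral_mono hf.norm.neg
      (integrable_logSumExp (hf.sub (integrable_const ψ))) fun x => ?_
    calc -‖f x‖ ≤ f x j := (abs_le.1 (norm_le_pi_norm (f x) j)).1
      _ = (f x - ψ) j := by simp [hj]
      _ ≤ logSumExp (f x - ψ) := le_logSumExp _ j
  have hterm : w i * ψ i ≤ ∑ i, w i * ψ i :=
    Finset.single_le_sum (f := fun i => w i * ψ i) (fun i _ => mul_nonneg (hw i) (hψ i))
      (Finset.mem_univ i)
  rw [entropicDual]
  linarith

lemma exists_forall_entropicDual_le (hf : Integrable f ν) (hw : ∀ i, 0 < w i)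
    (hw1 : ∑ i, w i = 1) : ∃ ψ, ∀ ψ', entropicDual ν f w ψ ≤ entropicDual ν f w ψ' := by
  set D := entropicDual ν f w
  obtain ⟨R, hR0, hR⟩ : ∃ R, 0 ≤ R ∧ ∀ i, (D 0 + ∫ x, ‖f x‖ ∂ν) / w i ≤ R := by
    obtain ⟨R, hR⟩ := Finite.bddAbove_range fun i => (D 0 + ∫ x, ‖f x‖ ∂ν) / w i
    exact ⟨max 0 R, le_max_left _ _, fun i => (hR ⟨i, rfl⟩).trans (le_max_right _ _)⟩
  obtain ⟨ψ, -, hψ⟩ := (isCompact_Icc (a := (0 : ι → ℝ)) (b := fun _ => R)).exists_isMinOn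
    ⟨0, le_rfl, fun _ => hR0⟩ (continuous_entropicDual (w := w) hf).continuousOn
  have hψ0 : D ψ ≤ D 0 := hψ ⟨le_rfl, fun _ => hR0⟩
  -- Subtracting its minimum from `ψ'` does not increase the functional; then coercivity applies.
  refine ⟨ψ, fun ψ' => ?_⟩
  obtain ⟨j, hj⟩ := Finite.exists_min ψ'
  set ψ₀ : ι → ℝ := fun i => ψ' i + -ψ' j
  have hnonneg (i : ι) : 0 ≤ ψ₀ i := by linarith [hj i]
  refine le_trans ?_ (entropicDual_add_const_le hf hw1 (-ψ' j))
  by_cases hbox : ∀ i, ψ₀ i ≤ R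
  · exact hψ ⟨hnonneg, hbox⟩
  · push Not at hbox
    obtain ⟨i, hi⟩ := hbox
    have hmul := mul_le_entropicDual_add hf (fun i => (hw i).le) hnonneg (add_neg_cancel _) i
    have hlt := (div_lt_iff₀' (hw i)).1 ((hR i).trans_lt hi)
    linarith

lemma integrable_softmax (hf : AEStronglyMeasurable f ν) (j : ι) :
    Integrable (fun x => softmax (f x) j) ν :=
  .of_mem_Icc 0 1 ((continuous_apply j).comp_aestronglyMeasurable
    (aestronglyMeasurable_softmax hf)).aemeasurable (.of_forall fun x =>
      mem_Icc_of_mem_stdSimplex (softmax_mem_stdSimplex (f x)) j)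

lemma integral_softmax_eq_of_forall_entropicDual_le (hf : Integrable f ν)
    (hψ : ∀ ψ', entropicDual ν f w ψ ≤ entropicDual ν f w ψ') (j : ι) :
    ∫ x, softmax (f x - ψ) j ∂ν = w j := by
  classical
  have hfψ : Integrable (fun x => f x - ψ) ν := hf.sub (integrable_const ψ)
  set a := ∫ x, softmax (f x - ψ) j ∂ν
  have hvar (t : ℝ) : 0 ≤ a * (Real.exp t - 1) - t * w j := by
    have hlse : ∫ x, logSumExp (f x - (ψ - Pi.single j t)) ∂ν ≤
        ∫ x, logSumExp (f x - ψ) ∂ν + a * (Real.exp t - 1) := by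
      have hsoft := (integrable_softmax hfψ.aestronglyMeasurable j).mul_const (Real.exp t - 1)
      rw [← integral_mul_const, ← integral_add (integrable_logSumExp hfψ) hsoft]
      refine integral_mono (integrable_logSumExp (hf.sub (integrable_const _)))
        ((integrable_logSumExp hfψ).add hsoft) fun x => ?_
      simpa only [sub_sub_eq_add_sub, sub_add_eq_add_sub] using
        logSumExp_add_single_le (f x - ψ) j t
    have hsum : ∑ i, w i * (ψ - Pi.single j t : ι → ℝ) i = ∑ i, w i * ψ i - w j * t := by
      simp [mul_sub, Finset.sum_sub_distrib, Pi.single_apply]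
    have := hψ (ψ - Pi.single j t)
    rw [entropicDual, entropicDual, hsum] at this
    linarith
  have hder : HasDerivAt (fun t => a * (Real.exp t - 1) - t * w j) (a - w j) 0 := by
    simpa using (((Real.hasDerivAt_exp 0).sub_const 1).const_mul a).fun_sub
      ((hasDerivAt_id' (0 : ℝ)).mul_const (w j))
  have hmin : IsLocalMin (fun t => a * (Real.exp t - 1) - t * w j) 0 :=
    .of_forall fun t => by simpa using hvar t
  exact sub_eq_zero.1 (hmin.hasDerivAt_eq_zero hder)

lemma exists_stdSimplex_valued_approx_dual (hf : Integrable f ν) (hw : ∀ i, 0 < w i)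
    (hw1 : ∑ i, w i = 1) {ε : ℝ} (hε : 0 < ε) :
    ∃ (ψ : ι → ℝ) (h : Ω → ι → ℝ), AEStronglyMeasurable h ν ∧ (∀ x, h x ∈ stdSimplex ℝ ι) ∧
      (∀ i, ∫ x, h x i ∂ν = w i) ∧ ∀ x j, f x j - ψ j - ε ≤ ∑ i, h x i * (f x i - ψ i) := by
  set n : ℝ := (Fintype.card ι : ℝ)
  have hn : 0 < n := Nat.cast_pos.2 Fintype.card_pos
  set δ := ε / n
  have hδ : 0 < δ := div_pos hε hn
  have hfδ : Integrable (fun x => δ⁻¹ • f x) ν := hf.fun_smul δ⁻¹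
  obtain ⟨ψ, hψ⟩ := exists_forall_entropicDual_le hfδ hw hw1
  refine ⟨δ • ψ, fun x => softmax (δ⁻¹ • f x - ψ),
    aestronglyMeasurable_softmax (hfδ.sub (integrable_const ψ)).aestronglyMeasurable,
    fun x => softmax_mem_stdSimplex _, integral_softmax_eq_of_forall_entropicDual_le hfδ hψ,
    fun x j => ?_⟩
  have hscale (i : ι) : f x i - (δ • ψ) i = δ * (δ⁻¹ • f x - ψ) i := by
    simp only [Pi.smul_apply, Pi.sub_apply, smul_eq_mul]
    field_simp
  simp only [hscale, mul_left_comm _ δ, ← Finset.mul_sum]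
  calc δ * (δ⁻¹ • f x - ψ) j - ε = δ * ((δ⁻¹ • f x - ψ) j - n) := by
        rw [mul_sub, div_mul_cancel₀ _ hn.ne']
    _ ≤ δ * (logSumExp (δ⁻¹ • f x - ψ) - n) := by
        gcongr
        exact le_logSumExp _ j
    _ ≤ _ := by
        gcongr
        exact logSumExp_sub_card_le _

end EntropicDual

section Splitting

variable {X Y ι : Type*} [MeasurableSpace X] [MeasurableSpace Y] [Fintype ι] {ν : Measure X}
  {h : X → ι → ℝ}

/-- The transport plan which sends the fraction `h x i` of the mass of `ν` at `x` to the point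
`y i`. -/
def splitting (ν : Measure X) (h : X → ι → ℝ) (y : ι → Y) : Measure (X × Y) :=
  ∑ i, (ν.withDensity fun x => ENNReal.ofReal (h x i)).map fun x => (x, y i)

lemma withDensity_ofReal_le (hmem : ∀ x, h x ∈ stdSimplex ℝ ι) (i : ι) :
    (ν.withDensity fun x => ENNReal.ofReal (h x i)) ≤ ν := by
  conv_rhs => rw [← withDensity_one (μ := ν)]
  refine withDensity_mono (.of_forall fun x => ?_)
  simpa using (mem_Icc_of_mem_stdSimplex (hmem x) i).2

lemma sum_withDensity_ofReal (hh : AEMeasurable h ν) (hmem : ∀ x, h x ∈ stdSimplex ℝ ι) :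
    ∑ i, (ν.withDensity fun x => ENNReal.ofReal (h x i)) = ν := by
  ext s hs
  have hone (x : X) : ∑ i, ENNReal.ofReal (h x i) = 1 := by
    rw [← ENNReal.ofReal_sum_of_nonneg fun i _ => (hmem x).1 i, (hmem x).2, ENNReal.ofReal_one]
  simp only [Measure.finsetSum_apply, withDensity_apply _ hs]
  rw [← lintegral_finsetSum' _ fun i _ => (hh.eval i).ennreal_ofReal.restrict]
  simp [hone]

lemma withDensity_ofReal_univ [IsFiniteMeasure ν] (hh : AEMeasurable h ν)
    (hmem : ∀ x, h x ∈ stdSimplex ℝ ι) (i : ι) :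
    (ν.withDensity fun x => ENNReal.ofReal (h x i)) Set.univ =
      ENNReal.ofReal (∫ x, h x i ∂ν) := by
  rw [withDensity_apply _ .univ, setLIntegral_univ, ofReal_integral_eq_lintegral_ofReal]
  · exact .of_mem_Icc 0 1 (hh.eval i) (.of_forall fun x => mem_Icc_of_mem_stdSimplex (hmem x) i)
  · exact .of_forall fun x => (hmem x).1 i

lemma isCoupling_splitting [IsFiniteMeasure ν] (hh : AEMeasurable h ν)
    (hmem : ∀ x, h x ∈ stdSimplex ℝ ι) (y : ι → Y) :
    IsCoupling (splitting ν h y) ν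
      (∑ i, ENNReal.ofReal (∫ x, h x i ∂ν) • Measure.dirac (y i)) := by
  constructor
  · conv_rhs => rw [← sum_withDensity_ofReal hh hmem]
    rw [Measure.fst, splitting, Measure.map_finset_sum (by fun_prop)]
    refine Finset.sum_congr rfl fun i _ => ?_
    exact (Measure.fst_map_prodMk measurable_const).trans Measure.map_id
  · rw [Measure.snd, splitting, Measure.map_finset_sum (by fun_prop)]
    refine Finset.sum_congr rfl fun i _ => ?_
    rw [← withDensity_ofReal_univ hh hmem i, ← Measure.map_const]
    exact Measure.snd_map_prodMk measurable_id

lemma integral_splitting (hh : AEMeasurable h ν) (hmem : ∀ x, h x ∈ stdSimplex ℝ ι) {y : ι → Y}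
    {F : X × Y → ℝ} (hF : Measurable F) (hFint : ∀ i, Integrable (fun x => F (x, y i)) ν) :
    ∫ p, F p ∂splitting ν h y = ∫ x, ∑ i, h x i * F (x, y i) ∂ν := by
  have hbdd (i : ι) : ∀ᵐ x ∂ν, ‖h x i‖ ≤ 1 := .of_forall fun x => by
    obtain ⟨h0, h1⟩ := mem_Icc_of_mem_stdSimplex (hmem x) i
    rwa [Real.norm_of_nonneg h0]
  rw [splitting, integral_finsetSum_measure, integral_finsetSum _ fun i _ =>
    (hFint i).bdd_mul (hh.eval i).aestronglyMeasurable (hbdd i)]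
  · refine Finset.sum_congr rfl fun i _ => ?_
    rw [integral_map (by fun_prop) hF.aestronglyMeasurable,
      integral_withDensity_eq_integral_toReal_smul₀ (hh.eval i).ennreal_ofReal (by simp)]
    simp only [ENNReal.toReal_ofReal ((hmem _).1 i), smul_eq_mul]
  · intro i _
    rw [integrable_map_measure hF.aestronglyMeasurable (by fun_prop)]
    exact (hFint i).mono_measure (withDensity_ofReal_le hmem i)

end Splitting

section SemiDiscrete

open scoped RealInnerProductSpace

section FiniteSupport

variable {Y : Type*} [MeasurableSpace Y] {ρ : Measure Y} {S : Finset Y}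

lemma exists_finset_ae_mem_measureReal_pos [IsFiniteMeasure ρ] [NeZero ρ]
    (hS : ∀ᵐ y ∂ρ, y ∈ S) :
    ∃ S' : Finset Y, S'.Nonempty ∧ (∀ᵐ y ∂ρ, y ∈ S') ∧ ∀ v ∈ S', 0 < ρ.real {v} := by
  classical
  have hae : ∀ᵐ y ∂ρ, y ∈ S.filter fun v => 0 < ρ.real {v} := by
    have hne : ∀ᵐ y ∂ρ, ∀ v ∈ S, y = v → 0 < ρ.real {v} := by
      refine (ae_ball_iff S.countable_toSet).2 fun v _ => ?_
      rcases (measureReal_nonneg (μ := ρ) (s := {v})).eq_or_lt with h0 | hpos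
      · filter_upwards [measure_eq_zero_iff_ae_notMem.1 ((measureReal_eq_zero_iff).1 h0.symm)]
          with y hy hyv using absurd hyv hy
      · exact .of_forall fun _ _ => hpos
    filter_upwards [hS, hne] with y hy hpos using Finset.mem_filter.2 ⟨hy, hpos y hy rfl⟩
  exact ⟨_, hae.exists.imp fun _ h => h, hae, by simp⟩

variable [MeasurableSingletonClass Y]

lemma integrable_of_ae_mem_finset [IsFiniteMeasure ρ] (hS : ∀ᵐ y ∂ρ, y ∈ S) (f : Y → ℝ) :
    Integrable f ρ := by
  rw [← Measure.restrict_eq_self_of_ae_mem hS]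
  exact IntegrableOn.of_finite S.finite_toSet

lemma sum_measureReal_singleton_eq_one [IsProbabilityMeasure ρ] (hS : ∀ᵐ y ∂ρ, y ∈ S) :
    ∑ v ∈ S, ρ.real {v} = 1 := by
  rw [sum_measureReal_singleton, ← probReal_univ (μ := ρ)]
  exact measureReal_congr (Filter.eventuallyEq_univ.2 hS)

end FiniteSupport

variable {E : Type*} [NormedAddCommGroup E] [InnerProductSpace ℝ E] [MeasurableSpace E]
  [BorelSpace E] [SecondCountableTopology E] {ν ρ : Measure E} [IsProbabilityMeasure ν]
  [IsProbabilityMeasure ρ]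

lemma exists_isCoupling_integral_maxAffine_sub_le {S : Finset E}
    (hν : Integrable (fun x => ‖x‖ ^ 2) ν) (hS : S.Nonempty) (hρS : ∀ᵐ y ∂ρ, y ∈ S)
    (hpos : ∀ v ∈ S, 0 < ρ.real {v}) {ε : ℝ} (hε : 0 < ε) :
    ∃ (ψ : E → ℝ) (π : Measure (E × E)), IsCoupling π ν ρ ∧
      ∫ p, (maxAffine S hS ψ p.1 - (⟪p.1, p.2⟫ - ψ p.2)) ∂π ≤ ε := by
  have : Nonempty S := hS.coe_sort
  have hf : Integrable (fun x (v : S) => ⟪x, (v : E)⟫) ν :=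
    .of_eval fun v => integrable_inner_const hν v
  obtain ⟨ψ₀, h, hh, hmem, hint, hle⟩ := exists_stdSimplex_valued_approx_dual (ε := ε) hf
    (w := fun v : S => ρ.real {(v : E)}) (fun v => hpos v v.2)
    ((S.sum_coe_sort fun v => ρ.real {v}).trans (sum_measureReal_singleton_eq_one hρS)) hε
  set ψ : E → ℝ := Function.extend Subtype.val ψ₀ 0
  have hψ₀ (v : S) : ψ v = ψ₀ v := Subtype.val_injective.extend_apply ψ₀ 0 v
  have hψ : Measurable ψ := (MeasurableEmbedding.subtype_coe S.measurableSet).measurable_extend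
    (measurable_of_countable ψ₀) measurable_const
  refine ⟨ψ, splitting ν h Subtype.val, ?_, ?_⟩
  · have := isCoupling_splitting hh.aemeasurable hmem (Subtype.val : S → E)
    simp only [hint, ofReal_measureReal (measure_ne_top ρ _)] at this
    rwa [S.sum_coe_sort fun v => ρ {v} • Measure.dirac v,
      ← Measure.ae_mem_finset_iff.1 hρS] at this
  have hM := continuous_maxAffine (ψ := ψ) hS
  rw [integral_splitting hh.aemeasurable hmem (by have := hM.measurable; fun_prop) fun v =>
    (integrable_maxAffine hν hS).sub ((integrable_inner_const hν v).sub (integrable_const (ψ v)))]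
  have hgap (x : E) : ∑ v : S, h x v * (maxAffine S hS ψ x - (⟪x, (v : E)⟫ - ψ v)) ≤ ε := by
    obtain ⟨v, hv, hvx⟩ := exists_maxAffine_eq (ψ := ψ) hS x
    have := hle x ⟨v, hv⟩
    simp only [← hψ₀] at this
    simp only [mul_sub _ (maxAffine S hS ψ x), Finset.sum_sub_distrib, ← Finset.sum_mul,
      (hmem x).2]
    linarith
  calc _ ≤ ∫ _, ε ∂ν := integral_mono_of_nonneg
        (.of_forall fun x => Finset.sum_nonneg fun v _ =>
          mul_nonneg ((hmem x).1 v) (sub_nonneg.2 (inner_sub_le_maxAffine hS v.2 x)))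
        (integrable_const ε) (.of_forall hgap)
    _ = ε := by simp

lemma exists_integral_maxAffine_add_integral_le_maxCorrelation {T : Finset E}
    (hν : Integrable (fun x => ‖x‖ ^ 2) ν) (hT : ∀ᵐ y ∂ρ, y ∈ T) {ε : ℝ} (hε : 0 < ε) :
    ∃ (S : Finset E) (hS : S.Nonempty) (ψ : E → ℝ), (∀ᵐ y ∂ρ, y ∈ S) ∧
      ∫ x, maxAffine S hS ψ x ∂ν + ∫ y, ψ y ∂ρ ≤ maxCorrelation ν ρ + ε := by
  obtain ⟨S, hS, hρS, hpos⟩ := exists_finset_ae_mem_measureReal_pos hT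
  obtain ⟨ψ, π, hπ, hgap⟩ := exists_isCoupling_integral_maxAffine_sub_le hν hS hρS hpos hε
  have hρ := integrable_of_ae_mem_finset hρS
  have hM := integrable_maxAffine (ψ := ψ) hν hS
  have hinner := hπ.integrable_inner hν (hρ _)
  have hinnerψ : Integrable (fun p : E × E => ⟪p.1, p.2⟫ - ψ p.2) π :=
    hinner.sub (hπ.integrable_snd (hρ ψ))
  rw [integral_sub (hπ.integrable_fst hM) hinnerψ,
    integral_sub hinner (hπ.integrable_snd (hρ ψ)), hπ.integral_fst hM,
    hπ.integral_snd (hρ ψ)] at hgap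
  exact ⟨S, hS, ψ, hρS, by linarith [hπ.integral_inner_le_maxCorrelation hν (hρ _)]⟩

end SemiDiscrete

section CConcaveOrder

open Filter Topology
open scoped RealInnerProductSpace

variable {E : Type*} [NormedAddCommGroup E] [InnerProductSpace ℝ E]

/-- A `c`-concave function for the cost `c(x, y) = ‖x - y‖² / 2` on a Hilbert space. Lower
semicontinuity of `‖·‖² / 2 - g`, which makes it a supremum of continuous affine functions, is
automatic on `ℝ^d`, see `cConcave_iff_isCConcave`. -/
def IsCConcave (g : E → ℝ) : Prop :=
  ConvexOn ℝ Set.univ (fun x => ‖x‖ ^ 2 / 2 - g x) ∧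
    LowerSemicontinuous fun x => ‖x‖ ^ 2 / 2 - g x

lemma cConcave_iff_isCConcave {d : ℕ} {g : EuclideanSpace ℝ (Fin d) → ℝ} :
    CConcave g ↔ IsCConcave g :=
  ⟨fun h => ⟨h, (continuousOn_univ.1 (h.continuousOn isOpen_univ)).lowerSemicontinuous⟩, And.left⟩

lemma isCConcave_sub_maxAffine {T : Finset E} (hT : T.Nonempty) (ψ : E → ℝ) :
    IsCConcave fun x => ‖x‖ ^ 2 / 2 - maxAffine T hT ψ x := by
  simp only [IsCConcave, sub_sub_cancel]
  exact ⟨convexOn_maxAffine hT, (continuous_maxAffine hT).lowerSemicontinuous⟩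

lemma exists_isLUB_inner_sub [CompleteSpace E] [SecondCountableTopology E] {φ : E → ℝ}
    (hφ : ConvexOn ℝ Set.univ φ) (hφc : LowerSemicontinuous φ) :
    ∃ (y : ℕ → E) (ψ : E → ℝ), ∀ x, IsLUB (Set.range fun n => ⟪x, y n⟫ - ψ (y n)) (φ x) := by
  obtain ⟨l, c, hle, hsup⟩ := hφ.real_univ_sSup_of_nat_affine_eq hφc
  set y : ℕ → E := fun n => (InnerProductSpace.toDual ℝ E).symm (l n)
  have hy (n : ℕ) (x : E) : ⟪x, y n⟫ = l n x := by
    rw [real_inner_comm, InnerProductSpace.toDual_symm_apply]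
  have hconj (n : ℕ) (x : E) : ⟪x, y n⟫ - φ x ≤ -c n := by
    have : l n x + c n ≤ φ x := hle n x
    linarith [hy n x]
  have hbdd (n : ℕ) : BddAbove (Set.range fun x => ⟪x, y n⟫ - φ x) :=
    ⟨-c n, Set.forall_mem_range.2 (hconj n)⟩
  refine ⟨y, fun v => ⨆ x, (⟪x, v⟫ - φ x), fun x => ⟨?_, fun a ha => ?_⟩⟩
  · rintro _ ⟨n, rfl⟩
    exact sub_le_comm.1 (le_ciSup (hbdd n) x)
  · rw [← hsup, iSup_apply]
    refine ciSup_le fun n => le_trans ?_ (ha ⟨n, rfl⟩)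
    have : ⨆ x, (⟪x, y n⟫ - φ x) ≤ -c n := ciSup_le (hconj n)
    change l n x + c n ≤ _
    linarith [hy n x]

lemma exists_monotone_tendsto_maxAffine [CompleteSpace E] [SecondCountableTopology E] {φ : E → ℝ}
    (hφ : ConvexOn ℝ Set.univ φ) (hφc : LowerSemicontinuous φ) :
    ∃ (T : ℕ → Finset E) (hT : ∀ n, (T n).Nonempty) (ψ : E → ℝ),
      (Monotone fun n => maxAffine (T n) (hT n) ψ) ∧
        ∀ x, Tendsto (fun n => maxAffine (T n) (hT n) ψ x) atTop (𝓝 (φ x)) := by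
  classical
  obtain ⟨y, ψ, hlub⟩ := exists_isLUB_inner_sub hφ hφc
  set T : ℕ → Finset E := fun n => (Finset.range (n + 1)).image y
  have hT (n : ℕ) : (T n).Nonempty := Finset.nonempty_range_add_one.image y
  have hmono : Monotone fun n => maxAffine (T n) (hT n) ψ := fun m n hmn =>
    Finset.sup'_mono _ (Finset.image_subset_image (Finset.range_subset_range.2 (by gcongr))) _
  refine ⟨T, hT, ψ, hmono, fun x => tendsto_atTop_isLUB (fun m n hmn => hmono hmn x) ⟨?_, ?_⟩⟩
  · rintro _ ⟨n, rfl⟩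
    obtain ⟨v, hv, hvx⟩ := exists_maxAffine_eq (ψ := ψ) (hT n) x
    obtain ⟨k, -, rfl⟩ := Finset.mem_image.1 hv
    exact hvx.trans_le ((hlub x).1 ⟨k, rfl⟩)
  · refine fun a ha => (hlub x).2 ?_
    rintro _ ⟨n, rfl⟩
    exact (inner_sub_le_maxAffine (hT n)
      (Finset.mem_image_of_mem y (Finset.self_mem_range_succ n)) x).trans (ha ⟨n, rfl⟩)

variable [MeasurableSpace E]

/-- The inequality `∫ g dν ≤ ∫ g dμ` for all polyhedral `c`-concave functions
`g = ‖·‖² / 2 - maxAffine T hT ψ`, through which both directions of the theorem pass. -/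
def PolyhedralCConcaveLE (ν μ : Measure E) : Prop :=
  ∀ (T : Finset E) (hT : T.Nonempty) (ψ : E → ℝ),
    ∫ x, maxAffine T hT ψ x ∂μ - (∫ x, ‖x‖ ^ 2 ∂μ) / 2 ≤
      ∫ x, maxAffine T hT ψ x ∂ν - (∫ x, ‖x‖ ^ 2 ∂ν) / 2

variable [BorelSpace E] [SecondCountableTopology E] {μ ν : Measure E} [IsFiniteMeasure μ]
  [IsFiniteMeasure ν]

lemma PolyhedralCConcaveLE.of_forall_isCConcave (hμ : Integrable (fun x => ‖x‖ ^ 2) μ)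
    (hν : Integrable (fun x => ‖x‖ ^ 2) ν)
    (H : ∀ g, IsCConcave g → Integrable g μ → Integrable g ν → ∫ x, g x ∂ν ≤ ∫ x, g x ∂μ) :
    PolyhedralCConcaveLE ν μ := by
  intro T hT ψ
  have hMμ := integrable_maxAffine (ψ := ψ) hμ hT
  have hMν := integrable_maxAffine (ψ := ψ) hν hT
  have := H _ (isCConcave_sub_maxAffine hT ψ) ((hμ.div_const 2).sub hMμ)
    ((hν.div_const 2).sub hMν)
  rw [integral_sub (hμ.div_const 2) hMμ, integral_sub (hν.div_const 2) hMν, integral_div,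
    integral_div] at this
  linarith

lemma PolyhedralCConcaveLE.integral_le [CompleteSpace E] (h : PolyhedralCConcaveLE ν μ)
    (hμ : Integrable (fun x => ‖x‖ ^ 2) μ) (hν : Integrable (fun x => ‖x‖ ^ 2) ν) {g : E → ℝ}
    (hg : IsCConcave g) (hgμ : Integrable g μ) (hgν : Integrable g ν) :
    ∫ x, g x ∂ν ≤ ∫ x, g x ∂μ := by
  obtain ⟨T, hT, ψ, hmono, hlim⟩ := exists_monotone_tendsto_maxAffine hg.1 hg.2
  have htendsto {α : Measure E} [IsFiniteMeasure α] (hα : Integrable (fun x => ‖x‖ ^ 2) α)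
      (hgα : Integrable g α) :
      Tendsto (fun n => ∫ x, maxAffine (T n) (hT n) ψ x ∂α - (∫ x, ‖x‖ ^ 2 ∂α) / 2) atTop
        (𝓝 (-∫ x, g x ∂α)) := by
    have hint : -∫ x, g x ∂α = ∫ x, (‖x‖ ^ 2 / 2 - g x) ∂α - (∫ x, ‖x‖ ^ 2 ∂α) / 2 := by
      rw [integral_sub (hα.div_const 2) hgα, integral_div]
      ring
    rw [hint]
    exact (integral_tendsto_of_tendsto_of_monotone (fun n => integrable_maxAffine hα (hT n))
      ((hα.div_const 2).sub hgα) (.of_forall fun x m n hmn => hmono hmn x)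
      (.of_forall hlim)).sub_const _
  exact neg_le_neg_iff.1 <|
    le_of_tendsto_of_tendsto' (htendsto hμ hgμ) (htendsto hν hgν) fun n => h (T n) (hT n) ψ

end CConcaveOrder

section WassersteinOrder

open Filter Topology
open scoped RealInnerProductSpace

variable {E : Type*} [NormedAddCommGroup E] [InnerProductSpace ℝ E] [MeasurableSpace E]
  [BorelSpace E] [SecondCountableTopology E] {μ ν ρ : Measure E} [IsProbabilityMeasure μ]
  {T : Finset E}

lemma maxCorrelation_le_integral_maxAffine_add [IsProbabilityMeasure ρ]
    (hμ : Integrable (fun x => ‖x‖ ^ 2) μ) (hT : T.Nonempty) (hρT : ∀ᵐ y ∂ρ, y ∈ T) (ψ : E → ℝ) :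
    maxCorrelation μ ρ ≤ ∫ x, maxAffine T hT ψ x ∂μ + ∫ y, ψ y ∂ρ := by
  have hρ := integrable_of_ae_mem_finset hρT
  refine maxCorrelation_le_integral_add_integral hμ (hρ _) (integrable_maxAffine hμ hT) (hρ ψ) ?_
  filter_upwards [hρT] with y hy x
  exact sub_le_iff_le_add.1 (inner_sub_le_maxAffine hT hy x)

lemma exists_ae_mem_integral_maxAffine_add_le_maxCorrelation
    (hμ : Integrable (fun x => ‖x‖ ^ 2) μ) (hT : T.Nonempty) (ψ : E → ℝ) :
    ∃ ρ : Measure E, IsProbabilityMeasure ρ ∧ (∀ᵐ y ∂ρ, y ∈ T) ∧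
      ∫ x, maxAffine T hT ψ x ∂μ + ∫ y, ψ y ∂ρ ≤ maxCorrelation μ ρ := by
  obtain ⟨j, hj, hjT⟩ := exists_measurable_maxAffine_eq (ψ := ψ) hT
  have hmem : ∀ᵐ y ∂μ.map j, y ∈ T :=
    (ae_map_iff hj.aemeasurable T.measurableSet).2 (.of_forall fun x => (hjT x).1)
  have hprob : IsProbabilityMeasure (μ.map j) := Measure.isProbabilityMeasure_map hj.aemeasurable
  have hint := integrable_of_ae_mem_finset hmem
  have hψj : Integrable (fun x => ψ (j x)) μ := (hint ψ).comp_measurable hj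
  have hgraph : Measurable fun x => (x, j x) := by fun_prop
  refine ⟨μ.map j, hprob, hmem, ?_⟩
  calc ∫ x, maxAffine T hT ψ x ∂μ + ∫ y, ψ y ∂μ.map j
      = ∫ x, (maxAffine T hT ψ x + ψ (j x)) ∂μ := by
        rw [integral_map hj.aemeasurable (hint ψ).aestronglyMeasurable,
          integral_add (integrable_maxAffine hμ hT) hψj]
    _ = ∫ p, ⟪p.1, p.2⟫ ∂μ.map fun x => (x, j x) := by
        rw [integral_map hgraph.aemeasurable (by fun_prop)]
        simp only [(hjT _).2, sub_add_cancel]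
    _ ≤ maxCorrelation μ (μ.map j) :=
        (IsCoupling.map_prodMk hj).integral_inner_le_maxCorrelation hμ (hint _)

variable [IsProbabilityMeasure ν]

namespace PolyhedralCConcaveLE

lemma of_forall_wassersteinSq_le (hμ : Integrable (fun x => ‖x‖ ^ 2) μ)
    (hν : Integrable (fun x => ‖x‖ ^ 2) ν)
    (H : ∀ ρ : Measure E, IsProbabilityMeasure ρ → ∀ T : Finset E, (∀ᵐ y ∂ρ, y ∈ T) →
      wassersteinSq ν ρ ≤ wassersteinSq μ ρ) : PolyhedralCConcaveLE ν μ := by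
  intro T hT ψ
  obtain ⟨ρ, hρ, hρT, hle⟩ := exists_ae_mem_integral_maxAffine_add_le_maxCorrelation hμ hT ψ
  have hW := (wassersteinSq_le_wassersteinSq_iff hμ hν
    (integrable_of_ae_mem_finset hρT _)).1 (H ρ hρ T hρT)
  linarith [maxCorrelation_le_integral_maxAffine_add hν hT hρT ψ]

variable [IsProbabilityMeasure ρ]

lemma wassersteinSq_le_of_ae_mem_finset (h : PolyhedralCConcaveLE ν μ)
    (hμ : Integrable (fun x => ‖x‖ ^ 2) μ) (hν : Integrable (fun x => ‖x‖ ^ 2) ν)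
    (hT : ∀ᵐ y ∂ρ, y ∈ T) :
    wassersteinSq ν ρ ≤ wassersteinSq μ ρ := by
  rw [wassersteinSq_le_wassersteinSq_iff hμ hν (integrable_of_ae_mem_finset hT _)]
  refine le_of_forall_pos_le_add fun ε hε => ?_
  obtain ⟨S, hS, ψ, hρS, hle⟩ :=
    exists_integral_maxAffine_add_integral_le_maxCorrelation hν hT hε
  linarith [h S hS ψ, maxCorrelation_le_integral_maxAffine_add hμ hS hρS ψ]

lemma wassersteinSq_le [CompleteSpace E] (h : PolyhedralCConcaveLE ν μ)
    (hμ : Integrable (fun x => ‖x‖ ^ 2) μ) (hν : Integrable (fun x => ‖x‖ ^ 2) ν)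
    (hρ : Integrable (fun y => ‖y‖ ^ 2) ρ) : wassersteinSq ν ρ ≤ wassersteinSq μ ρ := by
  obtain ⟨s, hs⟩ := exists_simpleFunc_tendsto_integral_norm_sub_sq hρ
  rw [wassersteinSq_le_wassersteinSq_iff hμ hν hρ]
  refine le_of_tendsto_of_tendsto' ((tendsto_maxCorrelation_map hμ hρ hs).sub_const _)
    ((tendsto_maxCorrelation_map hν hρ hs).sub_const _) fun n => ?_
  have hprob : IsProbabilityMeasure (ρ.map (s n)) :=
    Measure.isProbabilityMeasure_map (s n).aemeasurable
  have hmem : ∀ᵐ y ∂ρ.map (s n), y ∈ (s n).range :=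
    (ae_map_iff (s n).aemeasurable (Finset.measurableSet _)).2
      (.of_forall fun y => (s n).mem_range_self y)
  exact (wassersteinSq_le_wassersteinSq_iff hμ hν (integrable_of_ae_mem_finset hmem _)).1
    (h.wassersteinSq_le_of_ae_mem_finset hμ hν hmem)

end PolyhedralCConcaveLE

end WassersteinOrder

lemma integrable_norm_sq_of_isCompact {E : Type*} [SeminormedAddCommGroup E] [MeasurableSpace E]
    [BorelSpace E] {ρ : Measure E} [IsFiniteMeasure ρ] {K : Set E} (hK : IsCompact K)
    (hρK : ρ Kᶜ = 0) : Integrable (fun y => ‖y‖ ^ 2) ρ := by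
  obtain ⟨C, hC⟩ := hK.exists_bound_of_continuousOn (f := fun y => ‖y‖ ^ 2) (by fun_prop)
  refine .of_bound (by fun_prop) C ?_
  filter_upwards [mem_ae_iff.2 hρK] with y hy using hC y hy

theorem stmt5_general {E : Type*} [NormedAddCommGroup E] [InnerProductSpace ℝ E] [CompleteSpace E]
    [SecondCountableTopology E] [MeasurableSpace E] [BorelSpace E] {μ ν : Measure E}
    [IsProbabilityMeasure μ] [IsProbabilityMeasure ν]
    (hμ : Integrable (fun x => ‖x‖ ^ 2) μ) (hν : Integrable (fun x => ‖x‖ ^ 2) ν) :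
    List.TFAE [
      ∀ g, IsCConcave g → Integrable g μ → Integrable g ν → ∫ x, g x ∂ν ≤ ∫ x, g x ∂μ,
      PolyhedralCConcaveLE ν μ,
      ∀ ρ : Measure E, IsProbabilityMeasure ρ → Integrable (fun y => ‖y‖ ^ 2) ρ →
        wassersteinSq ν ρ ≤ wassersteinSq μ ρ,
      ∀ ρ : Measure E, IsProbabilityMeasure ρ → (∃ K, IsCompact K ∧ ρ Kᶜ = 0) →
        wassersteinSq ν ρ ≤ wassersteinSq μ ρ,
      ∀ ρ : Measure E, IsProbabilityMeasure ρ → ∀ T : Finset E, (∀ᵐ y ∂ρ, y ∈ T) →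
        wassersteinSq ν ρ ≤ wassersteinSq μ ρ] := by
  tfae_have 1 → 2 := .of_forall_isCConcave hμ hν
  tfae_have 2 → 1 := fun h g hg hgμ hgν => h.integral_le hμ hν hg hgμ hgν
  tfae_have 2 → 3 := fun h ρ _ hρ => h.wassersteinSq_le hμ hν hρ
  tfae_have 3 → 4 := fun h ρ hprob ⟨_, hK, hρK⟩ =>
    h ρ hprob (integrable_norm_sq_of_isCompact hK hρK)
  tfae_have 4 → 5 := fun h ρ hprob T hT => h ρ hprob ⟨T, T.finite_toSet.isCompact, hT⟩
  tfae_have 5 → 2 := .of_forall_wassersteinSq_le hμ hν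
  tfae_finish

theorem stmt5 (d : ℕ) (hd : 1 ≤ d)
    (μ ν : Measure (EuclideanSpace ℝ (Fin d)))
    [IsProbabilityMeasure μ] [IsProbabilityMeasure ν]
    (hμ : Integrable (fun x => ‖x‖ ^ 2) μ) (hν : Integrable (fun y => ‖y‖ ^ 2) ν) :
    (∀ g : EuclideanSpace ℝ (Fin d) → ℝ, CConcave g →
        Integrable g μ → Integrable g ν → ∫ y, g y ∂ν ≤ ∫ x, g x ∂μ) ↔
      ∀ ρ : Measure (EuclideanSpace ℝ (Fin d)), IsProbabilityMeasure ρ →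
        (∃ K : Set (EuclideanSpace ℝ (Fin d)), IsCompact K ∧ ρ Kᶜ = 0) →
        W2sq ν ρ ≤ W2sq μ ρ := by
  simp only [cConcave_iff_isCConcave]
  exact (stmt5_general hμ hν).out 0 3
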